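/- Let a > 0, b ≥ 1, c ≥ b+1, α ≥ 1, β ≥ α+1, p > 0 and z ∈ ℝ with |z| < 1. Then ₂F₁^{(α,β;p)}(a,b;c;z) ≤ (λ_{α−1,β−α−1}/(4 p B(α,β−α))) · ₂F₁(a,b;c;z). -/

import Mathlib

open Real MeasureTheory

/-- Classical Euler beta function `B(x,y) = ∫₀¹ t^(x-1) (1-t)^(y-1) dt`. -/
noncomputable def eulerBeta (x y : ℝ) : ℝ :=
  ∫ t in (0:ℝ)..1, t ^ (x - 1) * (1 - t) ^ (y - 1)

/-- `λ_{x,y} = x^x y^y / (x+y)^(x+y)`; the convention `0^0 = 1` is automatic for `rpow`. -/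
noncomputable def lam (x y : ℝ) : ℝ := x ^ x * y ^ y / (x + y) ^ (x + y)

/-- Pochhammer symbol `(x)_n = x (x+1) ⋯ (x+n-1)`. -/
noncomputable def poch (x : ℝ) (n : ℕ) : ℝ := ∏ k ∈ Finset.range n, (x + k)

/-- Confluent hypergeometric (Kummer) function `₁F₁(b;c;z)`. -/
noncomputable def oneF1 (b c z : ℝ) : ℝ :=
  ∑' n : ℕ, poch b n / poch c n * z ^ n / (Nat.factorial n : ℝ)

/-- Gauss hypergeometric function `₂F₁(a,b;c;z)`. -/
noncomputable def twoF1 (a b c z : ℝ) : ℝ :=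
  ∑' n : ℕ, poch a n * poch b n / poch c n * z ^ n / (Nat.factorial n : ℝ)

/-- Generalized Gauss hypergeometric function `₂F₁^(α,β;p)(a,b;c;z)` (integral form). -/
noncomputable def genTwoF1 (α β p a b c z : ℝ) : ℝ :=
  (1 / eulerBeta b (c - b)) *
    ∫ t in (0:ℝ)..1,
      t ^ (b - 1) * (1 - t) ^ (c - b - 1) * (1 - z * t) ^ (-a) *
        oneF1 α β (-p / (t * (1 - t)))


lemma eulerBeta_eq (x y : ℝ) (hx : 0 < x) (hy : 0 < y) :
    eulerBeta x y = Real.Gamma x * Real.Gamma y / Real.Gamma (x + y) := by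
  have h := ProbabilityTheory.beta_eq_betaIntegralReal x y hx hy
  have h2 : Complex.betaIntegral x y = ((eulerBeta x y : ℝ) : ℂ) := by
    unfold Complex.betaIntegral eulerBeta
    rw [← intervalIntegral.integral_ofReal]
    apply intervalIntegral.integral_congr
    intro t ht
    rw [Set.uIcc_of_le zero_le_one] at ht
    simp only
    push_cast
    rw [Complex.ofReal_cpow ht.1, Complex.ofReal_cpow (by linarith [ht.2])]
    push_cast
    rfl
  rw [h2, Complex.ofReal_re] at h
  rw [← h]; rfl

lemma eulerBeta_pos (x y : ℝ) (hx : 0 < x) (hy : 0 < y) : 0 < eulerBeta x y := by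
  rw [eulerBeta_eq x y hx hy]
  exact ProbabilityTheory.beta_pos hx hy

lemma poch_pos (x : ℝ) (hx : 0 < x) (n : ℕ) : 0 < poch x n :=
  Finset.prod_pos fun k _ => by positivity

lemma poch_succ (x : ℝ) (n : ℕ) : poch x (n + 1) = poch x n * (x + n) := by
  simp [poch, Finset.prod_range_succ]

lemma gamma_add_nat (x : ℝ) (hx : 0 < x) (n : ℕ) :
    Real.Gamma (x + n) = poch x n * Real.Gamma x := by
  induction n with
  | zero => simp [poch]
  | succ n ih =>
    push_cast
    rw [← add_assoc, Real.Gamma_add_one (by positivity), ih, poch_succ]; ring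

lemma eulerBeta_add_nat (x y : ℝ) (hx : 0 < x) (hy : 0 < y) (n : ℕ) :
    eulerBeta (x + n) y = poch x n / poch (x + y) n * eulerBeta x y := by
  rw [eulerBeta_eq x y hx hy, eulerBeta_eq _ y (by positivity) hy, gamma_add_nat x hx,
    show x + n + y = (x + y) + n by ring, gamma_add_nat (x + y) (by positivity)]
  have := (poch_pos (x + y) (by positivity) n).ne'
  have := (Real.Gamma_pos_of_pos (add_pos hx hy)).ne'
  field_simp

lemma weight_cont (b d : ℝ) (hb : 1 ≤ b) (hd : 1 ≤ d) :
    Continuous fun t : ℝ => t ^ (b - 1) * (1 - t) ^ (d - 1) :=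
  (Real.continuous_rpow_const (by linarith)).mul
    ((Real.continuous_rpow_const (by linarith)).comp (continuous_const.sub continuous_id))

lemma key (b d : ℝ) (hb : 1 ≤ b) (hd : 1 ≤ d) (A : ℕ → ℝ) (hA : Summable fun n => |A n|)
    (f : ℝ → ℝ) (hf : ∀ t ∈ Set.Icc (0:ℝ) 1, HasSum (fun n => A n * t ^ n) (f t)) :
    HasSum (fun n => A n * (poch b n / poch (b + d) n * eulerBeta b d))
      (∫ t in (0:ℝ)..1, t ^ (b - 1) * (1 - t) ^ (d - 1) * f t) := by
  have hw := weight_cont b d hb hd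
  have h := intervalIntegral.hasSum_integral_of_dominated_convergence (μ := volume)
    (a := (0:ℝ)) (b := 1)
    (F := fun n t => t ^ (b - 1) * (1 - t) ^ (d - 1) * (A n * t ^ n))
    (f := fun t => t ^ (b - 1) * (1 - t) ^ (d - 1) * f t)
    (fun n _ => |A n|) (fun n => (hw.mul (by fun_prop)).aestronglyMeasurable)
    ?_ ?_ ?_ ?_
  · refine Eq.mp (congrArg (fun F => HasSum F _) (funext fun n => ?_)) h; symm
    rw [← eulerBeta_add_nat b d (by linarith) (by linarith), eulerBeta,
      ← intervalIntegral.integral_const_mul, intervalIntegral.integral_of_le zero_le_one,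
      intervalIntegral.integral_of_le zero_le_one]
    apply setIntegral_congr_fun measurableSet_Ioc
    intro t ht
    simp only
    rw [show b + n - 1 = (b - 1) + (n:ℝ) by ring, Real.rpow_add ht.1, Real.rpow_natCast]
    ring
  · intro n
    filter_upwards with t ht
    rw [Set.uIoc_of_le zero_le_one] at ht
    have h1 : t ^ (b - 1) ≤ 1 := Real.rpow_le_one ht.1.le ht.2 (by linarith)
    have h2 : (1 - t) ^ (d - 1) ≤ 1 :=
      Real.rpow_le_one (by linarith [ht.2]) (by linarith [ht.1]) (by linarith)
    have h3 : t ^ n ≤ 1 := pow_le_one₀ ht.1.le ht.2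
    have p1 : 0 ≤ t ^ (b - 1) := Real.rpow_nonneg ht.1.le _
    have p2 : 0 ≤ (1 - t) ^ (d - 1) := Real.rpow_nonneg (by linarith [ht.2]) _
    have p3 : 0 ≤ t ^ n := pow_nonneg ht.1.le _
    rw [Real.norm_eq_abs, abs_mul, abs_mul, abs_mul, abs_of_nonneg p1, abs_of_nonneg p2,
      abs_of_nonneg p3]
    have : t ^ (b - 1) * (1 - t) ^ (d - 1) ≤ 1 := mul_le_one₀ h1 p2 h2
    calc _ ≤ 1 * (|A n| * 1) := by gcongr
      _ = _ := by ring
  · filter_upwards with t _ using hA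
  · exact intervalIntegrable_const
  · filter_upwards with t ht
    rw [Set.uIoc_of_le zero_le_one] at ht
    exact (hf t ⟨ht.1.le, ht.2⟩).mul_left _

lemma choose_eq_poch (a : ℝ) (n : ℕ) :
    Ring.choose (a + n - 1) n = poch a n / (n.factorial : ℝ) := by
  have hn : (n.factorial : ℝ) ≠ 0 := by exact_mod_cast n.factorial_ne_zero
  rw [eq_div_iff hn, ← Ring.multichoose_eq, mul_comm, ← nsmul_eq_mul,
    Ring.factorial_nsmul_multichoose_eq_ascPochhammer, Polynomial.ascPochhammer_smeval_eq_eval]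
  induction n with
  | zero => simp [poch]
  | succ n ih => rw [ascPochhammer_succ_eval, ih (by positivity), poch_succ]

lemma binom_hasSum (a x : ℝ) (hx : |x| < 1) :
    HasSum (fun n : ℕ => poch a n / (n.factorial : ℝ) * x ^ n) ((1 - x) ^ (-a)) := by
  have h := (Real.one_div_one_sub_rpow_hasFPowerSeriesOnBall_zero a).hasSum (y := x)
    (by simpa [enorm_eq_nnnorm] using! hx)
  simp only [zero_add, one_div] at h
  rw [Real.rpow_neg (by linarith [(abs_lt.1 hx).2])]
  refine Eq.mp (congrArg (fun F => HasSum F _) (funext fun n => ?_)) h; symm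
  rw [← choose_eq_poch]
  simp [mul_comm]

lemma twoF1_int (a b c z : ℝ) (ha : 0 < a) (hb : 1 ≤ b) (hc : b + 1 ≤ c) (hz : |z| < 1) :
    ∫ t in (0:ℝ)..1, t ^ (b - 1) * (1 - t) ^ (c - b - 1) * (1 - z * t) ^ (-a) =
      eulerBeta b (c - b) * twoF1 a b c z := by
  have h := key b (c - b) hb (by linarith) (fun n => poch a n / (n.factorial : ℝ) * z ^ n)
    ?_ (fun t => (1 - z * t) ^ (-a)) ?_
  · rw [← h.tsum_eq, twoF1, ← tsum_mul_left]
    congr 1; ext n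
    rw [show b + (c - b) = c by ring]; ring
  · have := (binom_hasSum a |z| (by simpa using hz)).summable
    convert this using 2 with n
    rw [abs_mul, abs_pow, abs_of_nonneg]
    have := poch_pos a ha n
    positivity
  · intro t ht
    have := binom_hasSum a (z * t) (by
      rw [abs_mul, abs_of_nonneg ht.1]
      nlinarith [abs_nonneg z, ht.1, ht.2])
    convert this using 2 with n
    ring

lemma oneF1_int (α β s : ℝ) (hα : 1 ≤ α) (hβ : α + 1 ≤ β) :
    ∫ t in (0:ℝ)..1, t ^ (α - 1) * (1 - t) ^ (β - α - 1) * Real.exp (s * t) =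
      eulerBeta α (β - α) * oneF1 α β s := by
  have hexp : ∀ x : ℝ, HasSum (fun n : ℕ => x ^ n / (n.factorial : ℝ)) (Real.exp x) := by
    intro x
    rw [Real.exp_eq_exp_ℝ]
    exact NormedSpace.expSeries_div_hasSum_exp x
  have h := key α (β - α) hα (by linarith) (fun n => s ^ n / (n.factorial : ℝ))
    ?_ (fun t => Real.exp (s * t)) ?_
  · rw [← h.tsum_eq, oneF1, ← tsum_mul_left]
    congr 1; ext n
    rw [show α + (β - α) = β by ring]; ring
  · convert (hexp |s|).summable using 2 with n
    rw [abs_div, abs_pow, Nat.abs_cast]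
  · intro t ht
    convert hexp (s * t) using 2 with n
    ring

lemma weight_le_lam (x y u : ℝ) (hx : 0 ≤ x) (hy : 0 ≤ y) (h0 : 0 ≤ u) (h1 : u ≤ 1) :
    u ^ x * (1 - u) ^ y ≤ lam x y := by
  have h1' : 0 ≤ 1 - u := by linarith
  unfold lam
  rcases hx.eq_or_lt with rfl | hx
  · rcases hy.eq_or_lt with rfl | hy
    · simp
    · have : (0:ℝ) < y ^ y := Real.rpow_pos_of_pos hy _
      simp only [Real.rpow_zero, one_mul, zero_add, div_self this.ne']
      exact Real.rpow_le_one h1' (by linarith) hy.le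
  rcases hy.eq_or_lt with rfl | hy
  · have : (0:ℝ) < x ^ x := Real.rpow_pos_of_pos hx _
    simp only [Real.rpow_zero, mul_one, add_zero, div_self this.ne']
    exact Real.rpow_le_one h0 h1 hx.le
  have hs : 0 < x + y := by positivity
  have h := Real.geom_mean_le_arith_mean2_weighted (w₁ := x / (x + y)) (w₂ := y / (x + y))
    (p₁ := u / x) (p₂ := (1 - u) / y) (by positivity) (by positivity) (by positivity)
    (by positivity) (by field_simp)
  have e : x / (x + y) * (u / x) + y / (x + y) * ((1 - u) / y) = 1 / (x + y) := by
    field_simp; ring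
  rw [e] at h
  have h2 := Real.rpow_le_rpow (by positivity) h hs.le
  rw [Real.mul_rpow (by positivity) (by positivity), ← Real.rpow_mul (by positivity),
    ← Real.rpow_mul (by positivity), div_mul_cancel₀ _ hs.ne', div_mul_cancel₀ _ hs.ne',
    Real.div_rpow h0 hx.le, Real.div_rpow h1' hy.le, Real.div_rpow zero_le_one hs.le,
    Real.one_rpow] at h2
  have px : (0:ℝ) < x ^ x := Real.rpow_pos_of_pos hx _
  have py : (0:ℝ) < y ^ y := Real.rpow_pos_of_pos hy _
  have ps : (0:ℝ) < (x + y) ^ (x + y) := Real.rpow_pos_of_pos hs _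
  rw [div_mul_div_comm, div_le_div_iff₀ (by positivity) ps, one_mul] at h2
  rw [le_div_iff₀ ps]
  exact h2

lemma oneF1_bounds (α β s : ℝ) (hα : 1 ≤ α) (hβ : α + 1 ≤ β) (hs : 0 < s) :
    0 ≤ oneF1 α β (-s) ∧
      oneF1 α β (-s) ≤ lam (α - 1) (β - α - 1) / (s * eulerBeta α (β - α)) := by
  have hB := eulerBeta_pos α (β - α) (by linarith) (by linarith)
  have h := oneF1_int α β (-s) hα hβ
  have hw := weight_cont α (β - α) hα (by linarith)
  have hnn : ∀ t ∈ Set.Icc (0:ℝ) 1, 0 ≤ t ^ (α - 1) * (1 - t) ^ (β - α - 1) := fun t ht =>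
    mul_nonneg (Real.rpow_nonneg ht.1 _) (Real.rpow_nonneg (by linarith [ht.2]) _)
  have h0 : 0 ≤ eulerBeta α (β - α) * oneF1 α β (-s) := by
    rw [← h]
    apply intervalIntegral.integral_nonneg zero_le_one
    intro t ht
    exact mul_nonneg (hnn t ht) (Real.exp_pos _).le
  have hl : 0 ≤ lam (α - 1) (β - α - 1) :=
    (hnn 0 (by simp)).trans
      (weight_le_lam _ _ 0 (by linarith) (by linarith) (by simp) (by simp))
  have h1 : eulerBeta α (β - α) * oneF1 α β (-s) ≤ lam (α - 1) (β - α - 1) * (1 / s) := by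
    rw [← h]
    calc _ ≤ ∫ t in (0:ℝ)..1, lam (α - 1) (β - α - 1) * Real.exp (-s * t) := by
          apply intervalIntegral.integral_mono_on zero_le_one
          · exact (hw.mul (by fun_prop)).intervalIntegrable _ _
          · exact Continuous.intervalIntegrable (by fun_prop) _ _
          · intro t ht
            exact mul_le_mul_of_nonneg_right
              (weight_le_lam _ _ t (by linarith) (by linarith) ht.1 ht.2) (Real.exp_pos _).le
      _ ≤ _ := by
          rw [intervalIntegral.integral_const_mul]
          apply mul_le_mul_of_nonneg_left _ hl
          have : ∫ t in (0:ℝ)..1, Real.exp (-s * t) = (1 - Real.exp (-s)) / s := by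
            rw [intervalIntegral.integral_comp_mul_left (fun x => Real.exp x) (by linarith),
              integral_exp]
            simp; field_simp; ring
          rw [this]
          gcongr
          linarith [Real.exp_pos (-s)]
  refine ⟨nonneg_of_mul_nonneg_right h0 hB, ?_⟩
  rw [le_div_iff₀ (by positivity)]
  rw [mul_one_div, le_div_iff₀ hs] at h1
  linarith

theorem stmt6 (a b c α β p z : ℝ) (ha : 0 < a) (hb : 1 ≤ b) (hc : b + 1 ≤ c)
    (hα : 1 ≤ α) (hβ : α + 1 ≤ β) (hp : 0 < p) (hz : |z| < 1) :
    genTwoF1 α β p a b c z ≤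
      lam (α - 1) (β - α - 1) / (4 * p * eulerBeta α (β - α)) * twoF1 a b c z := by
  have hB := eulerBeta_pos b (c - b) (by linarith) (by linarith)
  have hB2 := eulerBeta_pos α (β - α) (by linarith) (by linarith)
  have hl : 0 ≤ lam (α - 1) (β - α - 1) :=
    (mul_nonneg (Real.rpow_nonneg le_rfl _) (Real.rpow_nonneg (by norm_num) _)).trans
      (weight_le_lam (α - 1) (β - α - 1) 0 (by linarith) (by linarith) le_rfl zero_le_one)
  have h2 := twoF1_int a b c z ha hb hc hz
  set K := lam (α - 1) (β - α - 1) / (4 * p * eulerBeta α (β - α)) with hK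
  have hpos : ∀ t ∈ Set.Icc (0:ℝ) 1, 0 < 1 - z * t := by
    intro t ht
    have := abs_lt.1 hz
    nlinarith [ht.1, ht.2]
  have main : (∫ t in (0:ℝ)..1, t ^ (b - 1) * (1 - t) ^ (c - b - 1) * (1 - z * t) ^ (-a) *
        oneF1 α β (-p / (t * (1 - t)))) ≤ K * (eulerBeta b (c - b) * twoF1 a b c z) := by
    rw [← h2, ← intervalIntegral.integral_const_mul, intervalIntegral.integral_of_le zero_le_one,
      intervalIntegral.integral_of_le zero_le_one, integral_Ioc_eq_integral_Ioo,
      integral_Ioc_eq_integral_Ioo]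
    have hfacts : ∀ t ∈ Set.Ioo (0:ℝ) 1,
        0 ≤ t ^ (b - 1) * (1 - t) ^ (c - b - 1) * (1 - z * t) ^ (-a) ∧
        0 ≤ oneF1 α β (-p / (t * (1 - t))) ∧ oneF1 α β (-p / (t * (1 - t))) ≤ K := by
      intro t ht
      have ht1 : 0 < 1 - t := by linarith [ht.2]
      have ht0 := ht.1
      have hs : 0 < p / (t * (1 - t)) := by positivity
      have hb := oneF1_bounds α β _ hα hβ hs
      rw [← neg_div] at hb
      refine ⟨mul_nonneg (mul_nonneg (Real.rpow_nonneg ht0.le _) (Real.rpow_nonneg ht1.le _))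
        (Real.rpow_nonneg (hpos t ⟨ht.1.le, ht.2.le⟩).le _), hb.1, hb.2.trans ?_⟩
      rw [hK]
      apply div_le_div_of_nonneg_left hl (by positivity)
      apply mul_le_mul_of_nonneg_right _ hB2.le
      rw [le_div_iff₀ (by positivity)]
      nlinarith [mul_nonneg hp.le (sq_nonneg (2 * t - 1))]
    apply integral_mono_of_nonneg
    · filter_upwards [ae_restrict_mem measurableSet_Ioo] with t ht
      exact mul_nonneg (hfacts t ht).1 (hfacts t ht).2.1
    · have hc' : ContinuousOn (fun t : ℝ =>
          K * (t ^ (b - 1) * (1 - t) ^ (c - b - 1) * (1 - z * t) ^ (-a))) (Set.Icc 0 1) := by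
        apply ContinuousOn.mul continuousOn_const
        apply ContinuousOn.mul (weight_cont b (c - b) hb (by linarith)).continuousOn
        apply ContinuousOn.rpow_const (by fun_prop)
        intro t ht
        exact Or.inl (hpos t ht).ne'
      exact (hc'.integrableOn_compact isCompact_Icc).mono_set Set.Ioo_subset_Icc_self
    · filter_upwards [ae_restrict_mem measurableSet_Ioo] with t ht
      rw [mul_comm K]
      exact mul_le_mul_of_nonneg_left (hfacts t ht).2.2 (hfacts t ht).1
  unfold genTwoF1
  calc _ ≤ 1 / eulerBeta b (c - b) * (K * (eulerBeta b (c - b) * twoF1 a b c z)) :=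
        mul_le_mul_of_nonneg_left main (by positivity)
    _ = _ := by field_simp
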